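/- arXiv:2105.03286 — 6 statements merged into one kernel-verified Lean document; each statement's English description precedes it below -/
import Mathlib

section
/- Let (X,r) be a set-theoretic YBE solution and (F,Φ,Ψ) a Drinfeld twist on (X,r). Then the bijection F ∘ r ∘ F⁻¹ : X² → X² also satisfies the braid relation, i.e. (X, F∘r∘F⁻¹) is again a set-theoretic YBE solution. -/
namespace YBETwist

/-- Apply a map on `X × X` to the factors 1,2 of a triple: `f₁₂ = f × id`. -/
def E12 {X : Type*} (f : (X × X) ≃ (X × X)) : (X × X × X) ≃ (X × X × X) :=
  ((Equiv.prodAssoc X X X).symm.trans (f.prodCongr (Equiv.refl X))).trans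
    (Equiv.prodAssoc X X X)

/-- Apply a map on `X × X` to the factors 2,3 of a triple: `f₂₃ = id × f`. -/
def E23 {X : Type*} (f : (X × X) ≃ (X × X)) : (X × X × X) ≃ (X × X × X) :=
  (Equiv.refl X).prodCongr f

/-- The braid relation `r₂₃ ∘ r₁₂ ∘ r₂₃ = r₁₂ ∘ r₂₃ ∘ r₁₂`; a set-theoretic YBE solution is a
bijection `r : X² → X²` satisfying it. -/
def IsBraided {X : Type*} (r : (X × X) ≃ (X × X)) : Prop :=
  ∀ p : X × X × X, E23 r (E12 r (E23 r p)) = E12 r (E23 r (E12 r p))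

/-- A Drinfeld twist `(F, Φ, Ψ)` on a set-theoretic YBE solution `(X, r)`. -/
structure IsTwist {X : Type*} (r F : (X × X) ≃ (X × X))
    (Φ Ψ : (X × X × X) ≃ (X × X × X)) : Prop where
  t1 : ∀ p, E12 F (Ψ p) = E23 F (Φ p)
  t2 : ∀ p, Φ (E23 r p) = E23 r (Φ p)
  t3 : ∀ p, Ψ (E12 r p) = E12 r (Ψ p)

/-- The twisted map `F ∘ r ∘ F⁻¹`. -/
def twisted {X : Type*} (r F : (X × X) ≃ (X × X)) : (X × X) ≃ (X × X) :=
  (F.symm.trans r).trans F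

/-!
The bijection `G = F₁₂ ∘ Ψ` of `X³`, which by (T1) is also `F₂₃ ∘ Φ`, intertwines `r₁₂` with
`(F ∘ r ∘ F⁻¹)₁₂` through its first expression and `r₂₃` with `(F ∘ r ∘ F⁻¹)₂₃` through its second.
Since one map `G` intertwines both pairs, the braid relation is carried along.
-/

open Function

theorem braid_relation_of_semiconj {α β : Type*} {a b : α → α} {c d : β → β} {g : α → β}
    (hg : Surjective g) (hac : Semiconj g a c) (hbd : Semiconj g b d)
    (hab : ∀ x, b (a (b x)) = a (b (a x))) (y : β) : d (c (d y)) = c (d (c y)) := by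
  obtain ⟨x, rfl⟩ := hg y
  calc d (c (d (g x))) = g (b (a (b x))) := (hbd.comp_right (hac.comp_right hbd) x).symm
    _ = g (a (b (a x))) := congrArg g (hab x)
    _ = c (d (c (g x))) := hac.comp_right (hbd.comp_right hac) x

section Legs

variable {X : Type*} {r s F : (X × X) ≃ (X × X)}

theorem semiconj_E12 (h : Semiconj F r s) : Semiconj (E12 F) (E12 r) (E12 s) :=
  fun ⟨x, y, z⟩ => congrArg (fun q : X × X => (q.1, q.2, z)) (h (x, y))

theorem semiconj_E23 (h : Semiconj F r s) : Semiconj (E23 F) (E23 r) (E23 s) :=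
  fun ⟨x, q⟩ => congrArg (Prod.mk x) (h q)

end Legs

theorem semiconj_twisted {X : Type*} (r F : (X × X) ≃ (X × X)) : Semiconj F r (twisted r F) :=
  fun q => congrArg (fun q' => F (r q')) (F.symm_apply_apply q).symm

namespace IsTwist

variable {X : Type*} {r F : (X × X) ≃ (X × X)} {Φ Ψ : (X × X × X) ≃ (X × X × X)}

theorem semiconj_E12_twisted (ht : IsTwist r F Φ Ψ) :
    Semiconj (E12 F ∘ Ψ) (E12 r) (E12 (twisted r F)) :=
  (semiconj_E12 (semiconj_twisted r F)).comp_left ht.t3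

theorem semiconj_E23_twisted (ht : IsTwist r F Φ Ψ) :
    Semiconj (E12 F ∘ Ψ) (E23 r) (E23 (twisted r F)) := by
  have hG : E12 F ∘ Ψ = E23 F ∘ Φ := funext ht.t1
  rw [hG]
  exact (semiconj_E23 (semiconj_twisted r F)).comp_left ht.t2

end IsTwist

theorem twist_of_YBE_is_YBE {X : Type*} (r F : (X × X) ≃ (X × X))
    (Φ Ψ : (X × X × X) ≃ (X × X × X))
    (hr : IsBraided r) (ht : IsTwist r F Φ Ψ) :
    IsBraided (twisted r F) :=
  braid_relation_of_semiconj ((E12 F).surjective.comp Ψ.surjective)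
    ht.semiconj_E12_twisted ht.semiconj_E23_twisted hr

end YBETwist
end

section
/- Let X be a set and σ, γ : X → X bijections with σ∘γ = γ∘σ and σ² = γ² = id_X, and define r(x,y) := (σ(y), γ(x)). Then (X,r) is a set-theoretic YBE solution; the maps F(x,y) := (σ(x), γ(y)), Φ(x,y,z) := (γ(σ(x)), σ(y), σ(z)), Ψ(x,y,z) := (γ(x), γ(y), γ(σ(z))) form a Drinfeld twist on (X,r); and the twisted solution is (F∘r∘F⁻¹)(x,y) = (γ(y), σ(x)). -/
namespace YBETwist

section

variable {X : Type*} {r F : (X × X) ≃ (X × X)}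

theorem E12_apply (f : (X × X) ≃ (X × X)) (x y z : X) :
    E12 f (x, y, z) = ((f (x, y)).1, (f (x, y)).2, z) := rfl

theorem E23_apply (f : (X × X) ≃ (X × X)) (x y z : X) :
    E23 f (x, y, z) = (x, f (y, z)) := rfl

theorem twisted_apply_apply (r F : (X × X) ≃ (X × X)) (p : X × X) :
    twisted r F (F p) = F (r p) :=
  congrArg (fun q => F (r q)) (F.symm_apply_apply p)

theorem isBraided_iff_commute {s t : X → X} (hr : ∀ x y, r (x, y) = (s y, t x)) :
    IsBraided r ↔ Function.Commute s t := by
  have left_side (x y z : X) :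
      E23 r (E12 r (E23 r (x, y, z))) = (s (s z), s (t y), t (t x)) := by
    simp only [E12_apply, E23_apply, hr]
  have right_side (x y z : X) :
      E12 r (E23 r (E12 r (x, y, z))) = (s (s z), t (s y), t (t x)) := by
    simp only [E12_apply, E23_apply, hr]
  constructor
  · intro h y
    have h_triple := h (y, y, y)
    rw [left_side, right_side] at h_triple
    exact congrArg (fun p => p.2.1) h_triple
  · rintro h ⟨x, y, z⟩
    rw [left_side, right_side, h.eq y]

theorem IsTwist.of_componentwise {Φ Ψ : (X × X × X) ≃ (X × X × X)} {s t f g a b c d : X → X}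
    (hr : ∀ x y, r (x, y) = (s y, t x)) (hF : ∀ x y, F (x, y) = (f x, g y))
    (hΦ : ∀ x y z, Φ (x, y, z) = (a x, b y, b z)) (hΨ : ∀ x y z, Ψ (x, y, z) = (c x, c y, d z))
    (hfc : ∀ x, f (c x) = a x) (hgc : ∀ x, g (c x) = f (b x)) (hgb : ∀ x, g (b x) = d x)
    (hbs : Function.Commute b s) (hbt : Function.Commute b t)
    (hcs : Function.Commute c s) (hct : Function.Commute c t) :
    IsTwist r F Φ Ψ where
  t1 := fun ⟨x, y, z⟩ => by simp only [E12_apply, E23_apply, hF, hΦ, hΨ, hfc, hgc, hgb]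
  t2 := fun ⟨x, y, z⟩ => by simp only [E23_apply, hr, hΦ, hbs.eq z, hbt.eq y]
  t3 := fun ⟨x, y, z⟩ => by simp only [E12_apply, hr, hΨ, hcs.eq y, hct.eq x]

theorem commuting_involutions_twist_general {Φ Ψ : (X × X × X) ≃ (X × X × X)} {σ γ : X → X}
    (hcomm : Function.Commute σ γ) (hsq : ∀ x, σ (σ x) = γ (γ x))
    (hr : ∀ x y, r (x, y) = (σ y, γ x)) (hF : ∀ x y, F (x, y) = (σ x, γ y))
    (hΦ : ∀ x y z, Φ (x, y, z) = (γ (σ x), σ y, σ z))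
    (hΨ : ∀ x y z, Ψ (x, y, z) = (γ x, γ y, γ (σ z))) :
    IsBraided r ∧ IsTwist r F Φ Ψ ∧ ∀ x y, twisted r F (x, y) = (γ y, σ x) := by
  refine ⟨(isBraided_iff_commute hr).mpr hcomm, ?_, fun x y => ?_⟩
  · exact .of_componentwise hr hF hΦ hΨ hcomm.eq (fun x => (hsq x).symm) (fun _ => rfl)
      (.refl σ) hcomm hcomm.symm (.refl γ)
  · obtain ⟨⟨u, v⟩, huv⟩ := F.surjective (x, y)
    obtain ⟨rfl, rfl⟩ : σ u = x ∧ γ v = y := by rwa [hF, Prod.mk.injEq] at huv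
    calc twisted r F (σ u, γ v) = F (r (u, v)) := by rw [← hF, twisted_apply_apply]
      _ = (σ (σ v), γ (γ u)) := by rw [hr, hF]
      _ = (γ (γ v), σ (σ u)) := by rw [hsq v, hsq u]

end

theorem commuting_involutions_twist {X : Type*} (σ γ : X → X)
    (hcomm : ∀ x, σ (γ x) = γ (σ x)) (hσ2 : ∀ x, σ (σ x) = x) (hγ2 : ∀ x, γ (γ x) = x)
    (r F : (X × X) ≃ (X × X)) (Φ Ψ : (X × X × X) ≃ (X × X × X))
    (hr : ∀ x y, r (x, y) = (σ y, γ x))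
    (hF : ∀ x y, F (x, y) = (σ x, γ y))
    (hΦ : ∀ x y z, Φ (x, y, z) = (γ (σ x), σ y, σ z))
    (hΨ : ∀ x y z, Ψ (x, y, z) = (γ x, γ y, γ (σ z))) :
    IsBraided r ∧ IsTwist r F Φ Ψ ∧
    ∀ x y, twisted r F (x, y) = (γ y, σ x) :=
  commuting_involutions_twist_general hcomm (fun x => (hσ2 x).trans (hγ2 x).symm) hr hF hΦ hΨ

end YBETwist
end

section
/- Let (G,·,e) be a group with braiding operator r and let (F,Φ,Ψ) be a Drinfeld twist on (G,·,e,r). Then the operation m∘F⁻¹ (i.e. x ∗ y := m(F⁻¹(x,y)), where m is the multiplication of G) makes G into a group with identity element e, and F∘r∘F⁻¹ is a braiding operator on the group (G, m∘F⁻¹, e). -/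
/-!
The axioms of a group with braiding operator are identities between maps of `G`, `G²` and `G³`, so
apart from the existence of inverses they can be moved along bijections `id`, `F`, `H` of these sets
that commute with the structure maps. For a Drinfeld twist one takes `H = F₁₂ ∘ Ψ = F₂₃ ∘ Φ`: the
first expression shows compatibility with `m₁₂` and `r₁₂`, the second with `m₂₃` and `r₂₃`. The
inverse of `a` for the new multiplication is the middle entry of `H (a, a⁻¹, a)`.
-/

namespace BraceTwist

/-- Apply a map on `G × G` to the factors 1,2 of a triple: `f₁₂ = f × id`. -/
def E12 {G : Type*} (f : (G × G) ≃ (G × G)) : (G × G × G) ≃ (G × G × G) :=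
  ((Equiv.prodAssoc G G G).symm.trans (f.prodCongr (Equiv.refl G))).trans
    (Equiv.prodAssoc G G G)

/-- Apply a map on `G × G` to the factors 2,3 of a triple: `f₂₃ = id × f`. -/
def E23 {G : Type*} (f : (G × G) ≃ (G × G)) : (G × G × G) ≃ (G × G × G) :=
  (Equiv.refl G).prodCongr f

/-- `m₁₂ : G³ → G²`, multiplying the first two factors. -/
def M12 {G : Type*} (mul : G → G → G) : G × G × G → G × G :=
  fun p => (mul p.1 p.2.1, p.2.2)

/-- `m₂₃ : G³ → G²`, multiplying the last two factors. -/
def M23 {G : Type*} (mul : G → G → G) : G × G × G → G × G :=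
  fun p => (p.1, mul p.2.1 p.2.2)

/-- `(mul, e, inv)` is a group structure on `G`. -/
structure IsGroup {G : Type*} (mul : G → G → G) (e : G) (inv : G → G) : Prop where
  mul_assoc : ∀ a b c, mul (mul a b) c = mul a (mul b c)
  one_mul : ∀ a, mul e a = a
  mul_one : ∀ a, mul a e = a
  inv_mul : ∀ a, mul (inv a) a = e
  mul_inv : ∀ a, mul a (inv a) = e

/-- `r` is a braiding operator on the group `(G, mul, e)`. -/
structure IsBraidingOp {G : Type*} (mul : G → G → G) (e : G)
    (r : (G × G) ≃ (G × G)) : Prop where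
  unit_left : ∀ g, r (e, g) = (g, e)
  unit_right : ∀ g, r (g, e) = (e, g)
  br1 : ∀ p : G × G × G, r (M12 mul p) = M23 mul (E12 r (E23 r p))
  br2 : ∀ p : G × G × G, r (M23 mul p) = M12 mul (E23 r (E12 r p))
  mul_r : ∀ p : G × G, mul (r p).1 (r p).2 = mul p.1 p.2

/-- A Drinfeld twist `(F, Φ, Ψ)` on the group with braiding operator `(G, mul, e, r)`. -/
structure IsGrpTwist {G : Type*} (mul : G → G → G) (e : G)
    (r F : (G × G) ≃ (G × G)) (Φ Ψ : (G × G × G) ≃ (G × G × G)) : Prop where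
  t1 : ∀ p, E12 F (Ψ p) = E23 F (Φ p)
  t2 : ∀ p, Φ (E23 r p) = E23 r (Φ p)
  t3 : ∀ p, Ψ (E12 r p) = E12 r (Ψ p)
  g1a : ∀ x y, Ψ (x, y, e) = (x, y, e)
  g1b : ∀ x y, Φ (e, x, y) = (e, x, y)
  g2a : ∀ x, F (e, x) = (e, x)
  g2b : ∀ x, F (x, e) = (x, e)
  g3 : ∀ p : G × G × G, M23 mul (Φ p) = F (M23 mul p)
  g4 : ∀ p : G × G × G, M12 mul (Ψ p) = F (M12 mul p)

/-- The twisted map `F ∘ r ∘ F⁻¹`. -/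
def twisted {G : Type*} (r F : (G × G) ≃ (G × G)) : (G × G) ≃ (G × G) :=
  (F.symm.trans r).trans F

/-- The twisted multiplication `m ∘ F⁻¹`. -/
def twistMul {G : Type*} (mul : G → G → G) (F : (G × G) ≃ (G × G)) : G → G → G :=
  fun x y => mul (F.symm (x, y)).1 (F.symm (x, y)).2

section Intertwining

open Function

variable {G : Type*} {mul mul' : G → G → G} {e : G} {r r' : (G × G) ≃ (G × G)}
  {F : G × G → G × G} {H : G × G × G → G × G × G}

/-- The maps `F` on `G²` and `H` on `G³`, together with the identity of `G`, intertwine the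
multiplications `mul` and `mul'`. `H` is an independent datum: it is not required to be induced by
a map of `G`. -/
structure MulIntertwines (mul mul' : G → G → G) (F : G × G → G × G)
    (H : G × G × G → G × G × G) : Prop where
  mul_map : ∀ p, mul' (F p).1 (F p).2 = mul p.1 p.2
  M12_map : ∀ p, M12 mul' (H p) = F (M12 mul p)
  M23_map : ∀ p, M23 mul' (H p) = F (M23 mul p)

/-- The maps `F` on `G²` and `H` on `G³` intertwine `r`, `r₁₂`, `r₂₃` with `r'`, `r'₁₂`, `r'₂₃`. -/
structure BraidIntertwines (r r' : (G × G) ≃ (G × G)) (F : G × G → G × G)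
    (H : G × G × G → G × G × G) : Prop where
  semiconj : Semiconj F r r'
  semiconj_E12 : Semiconj H (E12 r) (E12 r')
  semiconj_E23 : Semiconj H (E23 r) (E23 r')

namespace MulIntertwines

theorem mul_eq_of_isFixedPt (h : MulIntertwines mul mul' F H) {x y : G}
    (hxy : IsFixedPt F (x, y)) : mul' x y = mul x y := by
  simpa only [hxy.eq] using h.mul_map (x, y)

theorem mul_assoc (h : MulIntertwines mul mul' F H) (hH : Surjective H)
    (hassoc : ∀ a b c, mul (mul a b) c = mul a (mul b c)) (a b c : G) :
    mul' (mul' a b) c = mul' a (mul' b c) := by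
  obtain ⟨p, hp⟩ := hH (a, b, c)
  have hleft : (mul' a b, c) = F (M12 mul p) := by rw [← h.M12_map, hp]; rfl
  have hright : (a, mul' b c) = F (M23 mul p) := by rw [← h.M23_map, hp]; rfl
  calc mul' (mul' a b) c
      = mul' (F (M12 mul p)).1 (F (M12 mul p)).2 := by rw [← hleft]
    _ = mul (mul p.1 p.2.1) p.2.2 := h.mul_map (M12 mul p)
    _ = mul p.1 (mul p.2.1 p.2.2) := hassoc _ _ _
    _ = mul' (F (M23 mul p)).1 (F (M23 mul p)).2 := (h.mul_map (M23 mul p)).symm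
    _ = mul' a (mul' b c) := by rw [← hright]

theorem exists_inv (h : MulIntertwines mul mul' F H) {a a' : G}
    (hFl : IsFixedPt F (e, a)) (hFr : IsFixedPt F (a, e))
    (hl : mul a' a = e) (hr : mul a a' = e) :
    ∃ b, mul' b a = e ∧ mul' a b = e := by
  obtain ⟨⟨x, b, y⟩, hH⟩ : ∃ q, H (a, a', a) = q := ⟨_, rfl⟩
  have h12 : (mul' x b, y) = (e, a) := by
    simpa only [hH, M12, hr, hFl.eq] using h.M12_map (a, a', a)
  have h23 : (x, mul' b y) = (a, e) := by
    simpa only [hH, M23, hl, hFr.eq] using h.M23_map (a, a', a)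
  obtain ⟨hxb, rfl⟩ := Prod.mk.inj h12
  obtain ⟨rfl, hby⟩ := Prod.mk.inj h23
  exact ⟨b, hby, hxb⟩

theorem exists_isGroup {inv : G → G} (h : MulIntertwines mul mul' F H) (hH : Surjective H)
    (hFl : ∀ x, IsFixedPt F (e, x)) (hFr : ∀ x, IsFixedPt F (x, e))
    (hG : IsGroup mul e inv) : ∃ inv' : G → G, IsGroup mul' e inv' := by
  choose inv' hl hr using fun a =>
    h.exists_inv (hFl a) (hFr a) (hG.inv_mul a) (hG.mul_inv a)
  exact ⟨inv', {
    mul_assoc := h.mul_assoc hH hG.mul_assoc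
    one_mul := fun a => (h.mul_eq_of_isFixedPt (hFl a)).trans (hG.one_mul a)
    mul_one := fun a => (h.mul_eq_of_isFixedPt (hFr a)).trans (hG.mul_one a)
    inv_mul := hl
    mul_inv := hr }⟩

theorem isBraidingOp (h : MulIntertwines mul mul' F H) (hb : BraidIntertwines r r' F H)
    (hF : Surjective F) (hH : Surjective H)
    (hFl : ∀ x, IsFixedPt F (e, x)) (hFr : ∀ x, IsFixedPt F (x, e))
    (hr : IsBraidingOp mul e r) : IsBraidingOp mul' e r' where
  unit_left g := by
    simpa only [hr.unit_left, (hFl g).eq, (hFr g).eq] using (hb.semiconj (e, g)).symm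
  unit_right g := by
    simpa only [hr.unit_right, (hFl g).eq, (hFr g).eq] using (hb.semiconj (g, e)).symm
  br1 := hH.forall.2 fun p => by
    rw [h.M12_map, ← hb.semiconj, hr.br1, ← hb.semiconj_E23, ← hb.semiconj_E12, h.M23_map]
  br2 := hH.forall.2 fun p => by
    rw [h.M23_map, ← hb.semiconj, hr.br2, ← hb.semiconj_E12, ← hb.semiconj_E23, h.M12_map]
  mul_r := hF.forall.2 fun p => by
    rw [← hb.semiconj, h.mul_map, h.mul_map, hr.mul_r]

end MulIntertwines

end Intertwining

section Twist

open Function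

variable {G : Type*} {mul mul' : G → G → G} {r r' F : (G × G) ≃ (G × G)}
  {Φ Ψ : G × G × G → G × G × G}

theorem M12_E12 (h : ∀ p, mul' (F p).1 (F p).2 = mul p.1 p.2) (p : G × G × G) :
    M12 mul' (E12 F p) = M12 mul p :=
  Prod.ext (h (p.1, p.2.1)) rfl

theorem M23_E23 (h : ∀ p, mul' (F p).1 (F p).2 = mul p.1 p.2) (p : G × G × G) :
    M23 mul' (E23 F p) = M23 mul p :=
  Prod.ext rfl (h p.2)

theorem semiconj_E12 (h : Semiconj F r r') : Semiconj (E12 F) (E12 r) (E12 r') := fun p =>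
  congrArg (fun q : G × G => (q.1, q.2, p.2.2)) (h (p.1, p.2.1))

theorem semiconj_E23 (h : Semiconj F r r') : Semiconj (E23 F) (E23 r) (E23 r') := fun p =>
  congrArg (Prod.mk p.1) (h p.2)

theorem twistMul_map (p : G × G) : twistMul mul F (F p).1 (F p).2 = mul p.1 p.2 := by
  simp only [twistMul, Prod.mk.eta, Equiv.symm_apply_apply]

theorem semiconj_twisted : Semiconj F r (twisted r F) := fun p => by
  simp only [twisted, Equiv.trans_apply, Equiv.symm_apply_apply]

theorem mulIntertwines_E12_comp (h : ∀ p, mul' (F p).1 (F p).2 = mul p.1 p.2)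
    (t1 : E12 F ∘ Ψ = E23 F ∘ Φ)
    (g3 : ∀ p, M23 mul (Φ p) = F (M23 mul p)) (g4 : ∀ p, M12 mul (Ψ p) = F (M12 mul p)) :
    MulIntertwines mul mul' F (E12 F ∘ Ψ) where
  mul_map := h
  M12_map p := (M12_E12 h (Ψ p)).trans (g4 p)
  M23_map p := by rw [t1]; exact (M23_E23 h (Φ p)).trans (g3 p)

theorem braidIntertwines_E12_comp (h : Semiconj F r r') (t1 : E12 F ∘ Ψ = E23 F ∘ Φ)
    (t2 : Semiconj Φ (E23 r) (E23 r)) (t3 : Semiconj Ψ (E12 r) (E12 r)) :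
    BraidIntertwines r r' F (E12 F ∘ Ψ) where
  semiconj := h
  semiconj_E12 := (semiconj_E12 h).comp_left t3
  semiconj_E23 := t1 ▸ (semiconj_E23 h).comp_left t2

theorem twisted_is_group_with_braiding_general {e : G} {inv : G → G}
    (hG : IsGroup mul e inv) (hr : IsBraidingOp mul e r) (hΨ : Surjective Ψ)
    (t1 : E12 F ∘ Ψ = E23 F ∘ Φ)
    (t2 : Semiconj Φ (E23 r) (E23 r)) (t3 : Semiconj Ψ (E12 r) (E12 r))
    (hFl : ∀ x, IsFixedPt F (e, x)) (hFr : ∀ x, IsFixedPt F (x, e))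
    (g3 : ∀ p, M23 mul (Φ p) = F (M23 mul p)) (g4 : ∀ p, M12 mul (Ψ p) = F (M12 mul p)) :
    (∃ inv' : G → G, IsGroup (twistMul mul F) e inv') ∧
    IsBraidingOp (twistMul mul F) e (twisted r F) := by
  have hH : Surjective (E12 F ∘ Ψ) := (E12 F).surjective.comp hΨ
  have hmul := mulIntertwines_E12_comp twistMul_map t1 g3 g4
  have hbraid := braidIntertwines_E12_comp semiconj_twisted t1 t2 t3
  exact ⟨hmul.exists_isGroup hH hFl hFr hG,
    hmul.isBraidingOp hbraid F.surjective hH hFl hFr hr⟩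

end Twist

theorem twisted_is_group_with_braiding {G : Type*} (mul : G → G → G) (e : G)
    (inv : G → G) (hG : IsGroup mul e inv)
    (r F : (G × G) ≃ (G × G)) (Φ Ψ : (G × G × G) ≃ (G × G × G))
    (hr : IsBraidingOp mul e r) (ht : IsGrpTwist mul e r F Φ Ψ) :
    (∃ inv' : G → G, IsGroup (twistMul mul F) e inv') ∧
    IsBraidingOp (twistMul mul F) e (twisted r F) :=
  twisted_is_group_with_braiding_general hG hr Ψ.surjective (funext ht.t1) ht.t2 ht.t3
    ht.g2a ht.g2b ht.g3 ht.g4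

end BraceTwist
end

section
/- Let (G,·,e) be a group with braiding operator r, written r(x,y) = (σ_x(y), γ_y(x)), and suppose each σ_x is bijective. Define F(x,y) := (x, σ_x(y)), Φ(x,y,z) := (x, σ_x(y), σ_{γ_y(x)}(z)), Ψ(x,y,z) := (x, y, σ_x(σ_y(z))). Then (F,Φ,Ψ) is a Drinfeld twist on (G,·,e,r); the twisted multiplication m∘F⁻¹ is exactly the additive group operation, (m∘F⁻¹)(x,y) = x ⋆ y := x·σ_x⁻¹(y); the twisted braiding operator is (F∘r∘F⁻¹)(x,y) = (y, σ_y(γ_{σ_x⁻¹(y)}(x))); and it satisfies y ⋆ σ_y(γ_{σ_x⁻¹(y)}(x)) = x ⋆ y for all x,y (i.e. the twisted braiding is the conjugation braiding of (G,⋆)). -/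
namespace BraceTwist

/-!
A braiding operator makes `σ` a left action of `G` on itself, with
`σ_x (y z) = σ_x y · σ_{γ_y x} z`. Acting by both sides of `σ_x y · γ_y x = x y` gives
`σ_{σ_x y} ∘ σ_{γ_y x} = σ_x ∘ σ_y`. With these identities only (T2) needs more, namely the middle
component of the braid relation; it comes from expanding `σ_x (y z)` in two ways and cancelling on
the left. Substituting `σ_x⁻¹ y` for `y` in `σ_x y · γ_y x = x y` gives the commutation relation
for `⋆`.
-/

section Factors

variable {G : Type*} (f : (G × G) ≃ (G × G)) (mul : G → G → G) (x y z : G)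

theorem E12_apply : E12 f (x, y, z) = ((f (x, y)).1, (f (x, y)).2, z) := rfl

theorem E23_apply : E23 f (x, y, z) = (x, f (y, z)) := rfl

theorem M12_apply : M12 mul (x, y, z) = (mul x y, z) := rfl

theorem M23_apply : M23 mul (x, y, z) = (x, mul y z) := rfl

end Factors

theorem IsGroup.mul_right_injective {G : Type*} {mul : G → G → G} {e : G} {inv : G → G}
    (hG : IsGroup mul e inv) (a : G) : Function.Injective (mul a) :=
  Function.LeftInverse.injective (g := mul (inv a)) fun b => by
    rw [← hG.mul_assoc, hG.inv_mul, hG.one_mul]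

namespace IsBraidingOp

variable {G : Type*} {mul : G → G → G} {e : G} {r : (G × G) ≃ (G × G)} {σ γ τ : G → G → G}

theorem sigma_unit_left (hbr : IsBraidingOp mul e r) (hr : ∀ x y, r (x, y) = (σ x y, γ y x))
    (x : G) : σ e x = x := by
  simpa only [hr] using congrArg Prod.fst (hbr.unit_left x)

theorem sigma_unit_right (hbr : IsBraidingOp mul e r) (hr : ∀ x y, r (x, y) = (σ x y, γ y x))
    (x : G) : σ x e = e := by
  simpa only [hr] using congrArg Prod.fst (hbr.unit_right x)

theorem gamma_unit_right (hbr : IsBraidingOp mul e r) (hr : ∀ x y, r (x, y) = (σ x y, γ y x))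
    (x : G) : γ x e = e := by
  simpa only [hr] using congrArg Prod.snd (hbr.unit_left x)

theorem sigma_mul_left (hbr : IsBraidingOp mul e r) (hr : ∀ x y, r (x, y) = (σ x y, γ y x))
    (x y z : G) : σ (mul x y) z = σ x (σ y z) := by
  simpa only [M12_apply, M23_apply, E12_apply, E23_apply, hr]
    using congrArg Prod.fst (hbr.br1 (x, y, z))

theorem sigma_mul_right (hbr : IsBraidingOp mul e r) (hr : ∀ x y, r (x, y) = (σ x y, γ y x))
    (x y z : G) : σ x (mul y z) = mul (σ x y) (σ (γ y x) z) := by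
  simpa only [M12_apply, M23_apply, E12_apply, E23_apply, hr]
    using congrArg Prod.fst (hbr.br2 (x, y, z))

theorem mul_sigma_gamma (hbr : IsBraidingOp mul e r) (hr : ∀ x y, r (x, y) = (σ x y, γ y x))
    (x y : G) : mul (σ x y) (γ y x) = mul x y := by
  simpa only [hr] using hbr.mul_r (x, y)

theorem sigma_sigma_gamma (hbr : IsBraidingOp mul e r) (hr : ∀ x y, r (x, y) = (σ x y, γ y x))
    (x y z : G) : σ (σ x y) (σ (γ y x) z) = σ x (σ y z) := by
  rw [← hbr.sigma_mul_left hr, hbr.mul_sigma_gamma hr, hbr.sigma_mul_left hr]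

/-- The middle component of the braid relation for `r`. -/
theorem sigma_gamma_sigma (hbr : IsBraidingOp mul e r) (hr : ∀ x y, r (x, y) = (σ x y, γ y x))
    (hmul : ∀ a, Function.Injective (mul a)) (x y z : G) :
    σ (γ (σ y z) x) (γ z y) = γ (σ (γ y x) z) (σ x y) := by
  apply hmul (σ x (σ y z))
  calc mul (σ x (σ y z)) (σ (γ (σ y z) x) (γ z y))
      = σ x (mul (σ y z) (γ z y)) := (hbr.sigma_mul_right hr _ _ _).symm
    _ = σ x (mul y z) := by rw [hbr.mul_sigma_gamma hr]
    _ = mul (σ x y) (σ (γ y x) z) := hbr.sigma_mul_right hr _ _ _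
    _ = mul (σ (σ x y) (σ (γ y x) z)) (γ (σ (γ y x) z) (σ x y)) :=
      (hbr.mul_sigma_gamma hr _ _).symm
    _ = mul (σ x (σ y z)) (γ (σ (γ y x) z) (σ x y)) := by rw [hbr.sigma_sigma_gamma hr]

theorem mul_gamma_of_rightInverse (hbr : IsBraidingOp mul e r)
    (hr : ∀ x y, r (x, y) = (σ x y, γ y x)) {x : G} (hτ : Function.RightInverse (τ x) (σ x))
    (y : G) : mul y (γ (τ x y) x) = mul x (τ x y) := by
  simpa only [hτ y] using hbr.mul_sigma_gamma hr x (τ x y)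

theorem isGrpTwist (hbr : IsBraidingOp mul e r) (hr : ∀ x y, r (x, y) = (σ x y, γ y x))
    (hmul : ∀ a, Function.Injective (mul a))
    {F : (G × G) ≃ (G × G)} {Φ Ψ : (G × G × G) ≃ (G × G × G)}
    (hF : ∀ x y, F (x, y) = (x, σ x y))
    (hΦ : ∀ x y z, Φ (x, y, z) = (x, σ x y, σ (γ y x) z))
    (hΨ : ∀ x y z, Ψ (x, y, z) = (x, y, σ x (σ y z))) :
    IsGrpTwist mul e r F Φ Ψ where
  t1 := fun (x, y, z) => by
    simp only [E12_apply, E23_apply, hF, hΦ, hΨ, hbr.sigma_sigma_gamma hr]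
  t2 := fun (x, y, z) => by
    simp only [E23_apply, hr, hΦ, hbr.sigma_sigma_gamma hr, hbr.sigma_gamma_sigma hr hmul]
  t3 := fun (x, y, z) => by
    simp only [E12_apply, hr, hΨ, hbr.sigma_sigma_gamma hr]
  g1a x y := by simp only [hΨ, hbr.sigma_unit_right hr]
  g1b x y := by simp only [hΦ, hbr.sigma_unit_left hr, hbr.gamma_unit_right hr]
  g2a x := by rw [hF, hbr.sigma_unit_left hr]
  g2b x := by rw [hF, hbr.sigma_unit_right hr]
  g3 := fun (x, y, z) => by simp only [M23_apply, hF, hΦ, hbr.sigma_mul_right hr]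
  g4 := fun (x, y, z) => by simp only [M12_apply, hF, hΨ, hbr.sigma_mul_left hr]

end IsBraidingOp

section Twisted

variable {G : Type*} {F : (G × G) ≃ (G × G)} {σ τ : G → G → G}

theorem symm_apply_of_rightInverse (hF : ∀ x y, F (x, y) = (x, σ x y)) {x : G}
    (hτ : Function.RightInverse (τ x) (σ x)) (y : G) : F.symm (x, y) = (x, τ x y) := by
  rw [Equiv.symm_apply_eq, hF, hτ y]

theorem twistMul_apply (mul : G → G → G) (hF : ∀ x y, F (x, y) = (x, σ x y)) {x : G}
    (hτ : Function.RightInverse (τ x) (σ x)) (y : G) : twistMul mul F x y = mul x (τ x y) := by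
  rw [twistMul, symm_apply_of_rightInverse hF hτ]

theorem twisted_apply {r : (G × G) ≃ (G × G)} {γ : G → G → G}
    (hr : ∀ x y, r (x, y) = (σ x y, γ y x)) (hF : ∀ x y, F (x, y) = (x, σ x y)) {x : G}
    (hτ : Function.RightInverse (τ x) (σ x)) (y : G) :
    twisted r F (x, y) = (y, σ y (γ (τ x y) x)) := by
  rw [twisted, Equiv.trans_apply, Equiv.trans_apply, symm_apply_of_rightInverse hF hτ, hr, hF,
    hτ y]

end Twisted

theorem theta_twist_to_trivial_brace_general {G : Type*} (mul : G → G → G) (e : G)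
    (hmul : ∀ a, Function.Injective (mul a))
    (r F : (G × G) ≃ (G × G)) (Φ Ψ : (G × G × G) ≃ (G × G × G))
    (σ γ τ : G → G → G)
    (hbr : IsBraidingOp mul e r)
    (hr : ∀ x y, r (x, y) = (σ x y, γ y x))
    (hτ : ∀ x, Function.LeftInverse (τ x) (σ x) ∧ Function.RightInverse (τ x) (σ x))
    (hF : ∀ x y, F (x, y) = (x, σ x y))
    (hΦ : ∀ x y z, Φ (x, y, z) = (x, σ x y, σ (γ y x) z))
    (hΨ : ∀ x y z, Ψ (x, y, z) = (x, y, σ x (σ y z))) :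
    IsGrpTwist mul e r F Φ Ψ ∧
    (∀ x y, twistMul mul F x y = mul x (τ x y)) ∧
    (∀ x y, twisted r F (x, y) = (y, σ y (γ (τ x y) x))) ∧
    (∀ x y, mul y (τ y (σ y (γ (τ x y) x))) = mul x (τ x y)) := by
  refine ⟨hbr.isGrpTwist hr hmul hF hΦ hΨ, fun x => twistMul_apply mul hF (hτ x).2,
    fun x => twisted_apply hr hF (hτ x).2, fun x y => ?_⟩
  rw [(hτ y).1, hbr.mul_gamma_of_rightInverse hr (hτ x).2]

theorem theta_twist_to_trivial_brace {G : Type*} (mul : G → G → G) (e : G)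
    (inv : G → G) (hG : IsGroup mul e inv)
    (r F : (G × G) ≃ (G × G)) (Φ Ψ : (G × G × G) ≃ (G × G × G))
    (σ γ τ : G → G → G)
    (hbr : IsBraidingOp mul e r)
    (hr : ∀ x y, r (x, y) = (σ x y, γ y x))
    (hτ : ∀ x, Function.LeftInverse (τ x) (σ x) ∧ Function.RightInverse (τ x) (σ x))
    (hF : ∀ x y, F (x, y) = (x, σ x y))
    (hΦ : ∀ x y z, Φ (x, y, z) = (x, σ x y, σ (γ y x) z))
    (hΨ : ∀ x y z, Ψ (x, y, z) = (x, y, σ x (σ y z))) :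
    IsGrpTwist mul e r F Φ Ψ ∧
    (∀ x y, twistMul mul F x y = mul x (τ x y)) ∧
    (∀ x y, twisted r F (x, y) = (y, σ y (γ (τ x y) x))) ∧
    (∀ x y, mul y (τ y (σ y (γ (τ x y) x))) = mul x (τ x y)) :=
  theta_twist_to_trivial_brace_general mul e hG.mul_right_injective r F Φ Ψ σ γ τ hbr hr hτ hF hΦ hΨ

end BraceTwist
end

section
/- Let G be a set carrying two group structures (G,·,e) and (G,⋆,e) with the same identity element e. Let r(x,y) := (y, y⁻¹·x·y) be the conjugation braiding operator of (G,·) and r'(x,y) := (y, y^{-⋆}⋆x⋆y) that of (G,⋆), where y^{-⋆} denotes the ⋆-inverse of y. Suppose (F,Φ,Ψ) is a Drinfeld twist on the group with braiding operator (G,·,e,r) such that m∘F⁻¹ = ⋆ (where m is the ·-multiplication) and F∘r∘F⁻¹ = r'. For p,x ∈ G define f_p(x) := the first component of F(x, x⁻¹·p). Then: F(x,y) = (f_{x·y}(x), f_{x·y}(y)) for all x,y ∈ G; f_p(p) = p for all p; f_{x·y}(x) ⋆ f_{x·y}(y) = x·y for all x,y; and each f_p is a group isomorphism from (G,·) to (G,⋆),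 i.e. a bijection of G with f_p(x·y) = f_p(x) ⋆ f_p(y) for all x,y. In particular (G,·) and (G,⋆) are isomorphic groups. -/
namespace BraceTwist

/-!
The conjugation braiding swaps its second argument into the first place without changing the
product. Since `F` carries `r` to `r'`, this expresses the second component of `F (x, y)` as the
first component of `F (y, y⁻¹ x y)`, so both components are values of the same map `f_{xy}`.

The same device applied to the iterated twist `F₁₂ ∘ Ψ = F₂₃ ∘ Φ` shows that its first two
components at `(x, y, z)` are `f_p x` and `f_p y`, where `p = xyz`. By (G4) their `⋆`-product is
the first component of `F (xy, z)`, which is `f_p (xy)`.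

Bijectivity needs no braiding: `F` maps the fibre `{(x, y) | x · y = p}` onto the fibre
`{(a, b) | a ⋆ b = p}`, and the first coordinate parametrizes both.
-/

section Group

variable {G : Type*} {mul : G → G → G} {e : G} {inv : G → G}

theorem IsGroup.mul_inv_cancel_left (h : IsGroup mul e inv) (a b : G) :
    mul a (mul (inv a) b) = b := by
  rw [← h.mul_assoc, h.mul_inv, h.one_mul]

theorem IsGroup.inv_mul_cancel_left (h : IsGroup mul e inv) (a b : G) :
    mul (inv a) (mul a b) = b := by
  rw [← h.mul_assoc, h.inv_mul, h.one_mul]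

theorem IsGroup.exists_mul_eq (h : IsGroup mul e inv) (a b : G) : ∃ c, mul a c = b :=
  ⟨mul (inv a) b, h.mul_inv_cancel_left a b⟩

theorem IsGroup.mul_conj (h : IsGroup mul e inv) (x y : G) :
    mul y (mul (mul (inv y) x) y) = mul x y := by
  rw [h.mul_assoc, h.mul_inv_cancel_left]

end Group

section Twisted

variable {G : Type*} {r F : (G × G) ≃ (G × G)}

theorem twistMul_apply_s15 (mul : G → G → G) (F : (G × G) ≃ (G × G)) (q : G × G) :
    twistMul mul F (F q).1 (F q).2 = mul q.1 q.2 := by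
  rw [twistMul, Prod.mk.eta, F.symm_apply_apply]

theorem twisted_apply_apply (r F : (G × G) ≃ (G × G)) (q : G × G) :
    twisted r F (F q) = F (r q) :=
  congrArg (F ∘ r) (F.symm_apply_apply q)

theorem E12_twisted_apply_E12 (r F : (G × G) ≃ (G × G)) (t : G × G × G) :
    E12 (twisted r F) (E12 F t) = E12 F (E12 r t) :=
  congrArg (fun q : G × G => (q.1, q.2, t.2.2)) (twisted_apply_apply r F (t.1, t.2.1))

theorem fst_apply_braiding (hfst : ∀ q, (twisted r F q).1 = q.2) (q : G × G) :
    (F (r q)).1 = (F q).2 := by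
  rw [← twisted_apply_apply, hfst]

end Twisted

/-- The map `f_p : x ↦ (F (x, x⁻¹ · p)).1`, that is, `F` on the fibre `{(x, y) | x · y = p}` read
off in first coordinates. -/
def fiberMap {G : Type*} (mul : G → G → G) (inv : G → G) (F : (G × G) ≃ (G × G)) (p x : G) : G :=
  (F (x, mul (inv x) p)).1

section FiberMap

variable {G : Type*} {mul smul : G → G → G} {e e' : G} {inv sinv : G → G}
  {r F : (G × G) ≃ (G × G)}

theorem fiberMap_mul_left (hG : IsGroup mul e inv) (F : (G × G) ≃ (G × G)) (x y : G) :
    fiberMap mul inv F (mul x y) x = (F (x, y)).1 := by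
  rw [fiberMap, hG.inv_mul_cancel_left]

theorem leftInverse_fiberMap (hG : IsGroup mul e inv) (hS : IsGroup smul e' sinv)
    (hF : ∀ q, smul (F q).1 (F q).2 = mul q.1 q.2) (p : G) :
    Function.LeftInverse (fiberMap smul sinv F.symm p) (fiberMap mul inv F p) := by
  intro x
  obtain ⟨y, rfl⟩ := hG.exists_mul_eq x p
  have hprod : mul x y = smul (F (x, y)).1 (F (x, y)).2 := (hF (x, y)).symm
  rw [fiberMap_mul_left hG, hprod, fiberMap_mul_left hS, Prod.mk.eta, F.symm_apply_apply]

theorem bijective_fiberMap (hG : IsGroup mul e inv) (hS : IsGroup smul e' sinv)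
    (hF : ∀ q, smul (F q).1 (F q).2 = mul q.1 q.2) (p : G) :
    Function.Bijective (fiberMap mul inv F p) := by
  have hF_symm : ∀ q, mul (F.symm q).1 (F.symm q).2 = smul q.1 q.2 := fun q => by
    rw [← hF, F.apply_symm_apply]
  exact ⟨(leftInverse_fiberMap hG hS hF p).injective,
    (leftInverse_fiberMap hS hG hF_symm p).surjective⟩

theorem apply_eq_fiberMap (hG : IsGroup mul e inv)
    (hr : ∀ x y, r (x, y) = (y, mul (mul (inv y) x) y))
    (hfst : ∀ q, (twisted r F q).1 = q.2) (x y : G) :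
    F (x, y) = (fiberMap mul inv F (mul x y) x, fiberMap mul inv F (mul x y) y) := by
  refine Prod.ext (fiberMap_mul_left hG F x y).symm ?_
  calc (F (x, y)).2
    _ = (F (y, mul (mul (inv y) x) y)).1 := by rw [← fst_apply_braiding hfst, hr]
    _ = fiberMap mul inv F (mul x y) y := by rw [← fiberMap_mul_left hG, hG.mul_conj]

end FiberMap

/-- The iterated twist `F₁₂ ∘ Ψ` on `G³`, which (T1) identifies with `F₂₃ ∘ Φ`. -/
def iteratedTwist {G : Type*} (F : (G × G) ≃ (G × G)) (Ψ : (G × G × G) ≃ (G × G × G)) :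
    (G × G × G) ≃ (G × G × G) :=
  Ψ.trans (E12 F)

namespace IsGrpTwist

variable {G : Type*} {mul : G → G → G} {e : G} {inv : G → G} {r F : (G × G) ≃ (G × G)}
  {Φ Ψ : (G × G × G) ≃ (G × G × G)}

theorem iteratedTwist_fst (ht : IsGrpTwist mul e r F Φ Ψ) (x y z : G) :
    (iteratedTwist F Ψ (x, y, z)).1 = (F (x, mul y z)).1 :=
  calc (iteratedTwist F Ψ (x, y, z)).1
    _ = (E23 F (Φ (x, y, z))).1 := congrArg Prod.fst (ht.t1 (x, y, z))
    _ = (F (x, mul y z)).1 := congrArg Prod.fst (ht.g3 (x, y, z))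

theorem iteratedTwist_braiding (ht : IsGrpTwist mul e r F Φ Ψ) (t : G × G × G) :
    iteratedTwist F Ψ (E12 r t) = E12 (twisted r F) (iteratedTwist F Ψ t) :=
  calc iteratedTwist F Ψ (E12 r t)
    _ = E12 F (E12 r (Ψ t)) := congrArg (E12 F) (ht.t3 t)
    _ = E12 (twisted r F) (iteratedTwist F Ψ t) := (E12_twisted_apply_E12 r F (Ψ t)).symm

theorem twistMul_iteratedTwist (ht : IsGrpTwist mul e r F Φ Ψ) (x y z : G) :
    twistMul mul F (iteratedTwist F Ψ (x, y, z)).1 (iteratedTwist F Ψ (x, y, z)).2.1 =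
      (F (mul x y, z)).1 :=
  calc twistMul mul F (iteratedTwist F Ψ (x, y, z)).1 (iteratedTwist F Ψ (x, y, z)).2.1
    _ = (M12 mul (Ψ (x, y, z))).1 := twistMul_apply_s15 mul F ((Ψ (x, y, z)).1, (Ψ (x, y, z)).2.1)
    _ = (F (mul x y, z)).1 := congrArg Prod.fst (ht.g4 (x, y, z))

theorem iteratedTwist_fst_eq_fiberMap (ht : IsGrpTwist mul e r F Φ Ψ) (hG : IsGroup mul e inv)
    (x y z : G) :
    (iteratedTwist F Ψ (x, y, z)).1 = fiberMap mul inv F (mul (mul x y) z) x := by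
  rw [ht.iteratedTwist_fst, hG.mul_assoc, fiberMap_mul_left hG]

theorem iteratedTwist_snd_eq_fiberMap (ht : IsGrpTwist mul e r F Φ Ψ) (hG : IsGroup mul e inv)
    (hr : ∀ x y, r (x, y) = (y, mul (mul (inv y) x) y))
    (hfst : ∀ q, (twisted r F q).1 = q.2) (x y z : G) :
    (iteratedTwist F Ψ (x, y, z)).2.1 = fiberMap mul inv F (mul (mul x y) z) y := by
  have hbraid : E12 r (x, y, z) = (y, mul (mul (inv y) x) y, z) :=
    congrArg (fun q : G × G => (q.1, q.2, z)) (hr x y)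
  calc (iteratedTwist F Ψ (x, y, z)).2.1
    _ = (E12 (twisted r F) (iteratedTwist F Ψ (x, y, z))).1 := (hfst _).symm
    _ = (iteratedTwist F Ψ (y, mul (mul (inv y) x) y, z)).1 := by
      rw [← ht.iteratedTwist_braiding, hbraid]
    _ = fiberMap mul inv F (mul (mul x y) z) y := by
      rw [ht.iteratedTwist_fst_eq_fiberMap hG, hG.mul_conj]

theorem fiberMap_self (ht : IsGrpTwist mul e r F Φ Ψ) (hG : IsGroup mul e inv) (p : G) :
    fiberMap mul inv F p p = p := by
  rw [fiberMap, hG.inv_mul, ht.g2b]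

theorem fiberMap_mul (ht : IsGrpTwist mul e r F Φ Ψ) (hG : IsGroup mul e inv)
    (hr : ∀ x y, r (x, y) = (y, mul (mul (inv y) x) y))
    (hfst : ∀ q, (twisted r F q).1 = q.2) (p x y : G) :
    fiberMap mul inv F p (mul x y) =
      twistMul mul F (fiberMap mul inv F p x) (fiberMap mul inv F p y) := by
  obtain ⟨z, rfl⟩ := hG.exists_mul_eq (mul x y) p
  rw [← ht.iteratedTwist_fst_eq_fiberMap hG, ← ht.iteratedTwist_snd_eq_fiberMap hG hr hfst,
    ht.twistMul_iteratedTwist, fiberMap_mul_left hG]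

end IsGrpTwist

theorem twist_between_trivial_braces_gives_isos {G : Type*}
    (mul smul : G → G → G) (e : G) (inv sinv : G → G)
    (hG : IsGroup mul e inv) (hS : IsGroup smul e sinv)
    (r r' F : (G × G) ≃ (G × G)) (Φ Ψ : (G × G × G) ≃ (G × G × G))
    (hr : ∀ x y, r (x, y) = (y, mul (mul (inv y) x) y))
    (hr' : ∀ x y, r' (x, y) = (y, smul (smul (sinv y) x) y))
    (ht : IsGrpTwist mul e r F Φ Ψ)
    (hmul : ∀ x y, twistMul mul F x y = smul x y)
    (htw : ∀ p : G × G, twisted r F p = r' p)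
    (f : G → G → G)
    (hf : ∀ p x, f p x = (F (x, mul (inv x) p)).1) :
    (∀ x y, F (x, y) = (f (mul x y) x, f (mul x y) y)) ∧
    (∀ p, f p p = p) ∧
    (∀ x y, smul (f (mul x y) x) (f (mul x y) y) = mul x y) ∧
    (∀ p, Function.Bijective (f p)) ∧
    (∀ p x y, f p (mul x y) = smul (f p x) (f p y)) := by
  obtain rfl : f = fiberMap mul inv F := funext₂ hf
  obtain rfl : smul = twistMul mul F := funext₂ fun x y => (hmul x y).symm
  obtain rfl : r' = twisted r F := Equiv.ext fun q => (htw q).symm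
  have hfst : ∀ q, (twisted r F q).1 = q.2 := fun q => congrArg Prod.fst (hr' q.1 q.2)
  have hF := apply_eq_fiberMap hG hr hfst
  refine ⟨hF, ht.fiberMap_self hG, fun x y => ?_,
    bijective_fiberMap hG hS (twistMul_apply_s15 mul F), ht.fiberMap_mul hG hr hfst⟩
  simpa only [hF] using twistMul_apply_s15 mul F (x, y)

end BraceTwist
end

section
/- Let (G,∘,e) be a group with braiding operator r, written r(x,y) = (σ_x(y), γ_y(x)) with each σ_x bijective, and let (F,Φ,Ψ) be a Drinfeld twist on (G,∘,e,r). Let ∘' := m∘F⁻¹ be the twisted multiplication and r' := F∘r∘F⁻¹ the twisted braiding operator, written r'(x,y) = (σ'_x(y), γ'_y(x)), and suppose each σ'_x is bijective. Then the additive groups (G,⋆), where x ⋆ y := x∘σ_x⁻¹(y), and (G,⋆'), where x ⋆' y := x∘'σ'_x⁻¹(y), are isomorphic: there exists a bijection f : G → G with f(x⋆y) = f(x) ⋆' f(y) for all x,y ∈ G. -/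
namespace BraceTwist

/-!
The isomorphism is `f x = F(x, x⁻¹)₁`. Since `F` carries `m` to the twisted product `∘'`, it maps
the pairs `(x, x⁻¹)` onto the pairs `(a, a⁻¹)` of the twisted group, so `f` is bijective. The triple
twist `T = F₁₂ Ψ = F₂₃ Φ` carries `m₁₂` and `m₂₃` to their twisted versions, and `r₁₂` to `r'₁₂`.
Write `T(x, y, (xy)⁻¹) = (u, v, w)`. Multiplying the last two factors gives `u = f(x)`; multiplying
the first two gives `u ∘' v = f(xy)`; braiding the first two, which preserves the product `xy`,
gives `σ'_u(v) = f(σ_x(y))`. Hence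
`f(x ⋆ σ_x(y)) = f(xy) = u ∘' v = f(x) ⋆' f(σ_x(y))`. Moreover `y ↦ v` is bijective because
`u ∘' v = f(xy)`, so `σ'_u` is bijective as soon as `σ_x` is.
-/

namespace IsGroup

variable {G : Type*} {mul : G → G → G} {e : G} {inv : G → G}

/-- The Mathlib group with operations `(mul, e, inv)`, giving access to the library of groups. -/
abbrev toGroup (hG : IsGroup mul e inv) : Group G where
  mul := mul
  mul_assoc := hG.mul_assoc
  one := e
  one_mul := hG.one_mul
  mul_one := hG.mul_one
  inv := inv
  inv_mul_cancel := hG.inv_mul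

theorem mul_eq_one_iff_eq_inv (hG : IsGroup mul e inv) {a b : G} : mul a b = e ↔ b = inv a :=
  letI := hG.toGroup
  mul_eq_one_iff_eq_inv'

theorem mul_inv_mul_rev (hG : IsGroup mul e inv) (a b : G) : mul b (inv (mul a b)) = inv a := by
  rw [← hG.mul_eq_one_iff_eq_inv, ← hG.mul_assoc, hG.mul_inv]

theorem mul_left_bijective (hG : IsGroup mul e inv) (a : G) : Function.Bijective (mul a) :=
  letI := hG.toGroup
  Group.mulLeft_bijective a

end IsGroup

section Twist

variable {G : Type*} {mul : G → G → G} {e : G} {inv : G → G}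
  {r F : (G × G) ≃ (G × G)} {Φ Ψ : (G × G × G) ≃ (G × G × G)}

theorem twistMul_apply_s16 (mul : G → G → G) (F : (G × G) ≃ (G × G)) (p : G × G) :
    twistMul mul F (F p).1 (F p).2 = mul p.1 p.2 := by
  simp only [twistMul, Prod.mk.eta, Equiv.symm_apply_apply]

/-- The triple twist `F₁₂ ∘ Ψ`, equal to `F₂₃ ∘ Φ` for a Drinfeld twist; it plays on `G³` the role
of `F` on `G²`. -/
def tripleTwist (F : (G × G) ≃ (G × G)) (Ψ : (G × G × G) ≃ (G × G × G)) :
    (G × G × G) ≃ (G × G × G) :=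
  Ψ.trans (E12 F)

/-- The inverse of the twisted group, read off the triple twist of `(a, a⁻¹, a)`. -/
def twistInv (inv : G → G) (F : (G × G) ≃ (G × G)) (Ψ : (G × G × G) ≃ (G × G × G)) (a : G) : G :=
  (tripleTwist F Ψ (a, inv a, a)).2.1

/-- The map `x ↦ F(x, x⁻¹)₁`, which is the isomorphism from the additive group of `(mul, e, r)` to
that of its twist. -/
def twistComparison (inv : G → G) (F : (G × G) ≃ (G × G)) (x : G) : G :=
  (F (x, inv x)).1

/-- The second entry `v` of the triple twist of `(x, y, (xy)⁻¹)`. Its first entry is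
`u = twistComparison inv F x`, and `(u, v)` plays for the twisted product and braiding the role that
`(x, y)` plays for the original ones. -/
def twistPartner (mul : G → G → G) (inv : G → G) (F : (G × G) ≃ (G × G))
    (Ψ : (G × G × G) ≃ (G × G × G)) (x y : G) : G :=
  (tripleTwist F Ψ (x, y, inv (mul x y))).2.1

theorem IsGroup.twistComparison_bijective {inv' : G → G} (hG : IsGroup mul e inv)
    (hG' : IsGroup (twistMul mul F) e inv') : Function.Bijective (twistComparison inv F) := by
  have apply_mk_inv (x : G) :
      F (x, inv x) = (twistComparison inv F x, inv' (twistComparison inv F x)) :=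
    Prod.ext rfl <| hG'.mul_eq_one_iff_eq_inv.1 <| (twistMul_apply_s16 mul F _).trans (hG.mul_inv x)
  refine ⟨fun x y hxy => ?_, fun a => ?_⟩
  · have hF : F (x, inv x) = F (y, inv y) := by rw [apply_mk_inv, apply_mk_inv, hxy]
    exact congrArg Prod.fst (F.injective hF)
  · obtain ⟨⟨x, y⟩, hxy⟩ := F.surjective (a, inv' a)
    have hmul : mul x y = e := by
      rw [← twistMul_apply_s16 mul F (x, y), hxy, hG'.mul_inv]
    obtain rfl := hG.mul_eq_one_iff_eq_inv.1 hmul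
    exact ⟨x, congrArg Prod.fst hxy⟩

namespace IsGrpTwist

theorem M12_tripleTwist (ht : IsGrpTwist mul e r F Φ Ψ) (p : G × G × G) :
    M12 (twistMul mul F) (tripleTwist F Ψ p) = F (M12 mul p) := by
  rw [← ht.g4]
  exact Prod.ext (twistMul_apply_s16 mul F ((Ψ p).1, (Ψ p).2.1)) rfl

theorem M23_tripleTwist (ht : IsGrpTwist mul e r F Φ Ψ) (p : G × G × G) :
    M23 (twistMul mul F) (tripleTwist F Ψ p) = F (M23 mul p) := by
  rw [tripleTwist, Equiv.trans_apply, ht.t1, ← ht.g3]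
  exact Prod.ext rfl (twistMul_apply_s16 mul F (Φ p).2)

theorem tripleTwist_E12 (ht : IsGrpTwist mul e r F Φ Ψ) (p : G × G × G) :
    tripleTwist F Ψ (E12 r p) = E12 (twisted r F) (tripleTwist F Ψ p) := by
  rw [tripleTwist, Equiv.trans_apply, Equiv.trans_apply, ht.t3]
  simp [E12, twisted]

theorem twistMul_assoc (ht : IsGrpTwist mul e r F Φ Ψ) (hG : IsGroup mul e inv) (a b c : G) :
    twistMul mul F (twistMul mul F a b) c = twistMul mul F a (twistMul mul F b c) := by
  obtain ⟨p, hp⟩ := (tripleTwist F Ψ).surjective (a, b, c)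
  have h₁₂ : (twistMul mul F a b, c) = F (M12 mul p) := by rw [← ht.M12_tripleTwist, hp, M12]
  have h₂₃ : (a, twistMul mul F b c) = F (M23 mul p) := by rw [← ht.M23_tripleTwist, hp, M23]
  calc twistMul mul F (twistMul mul F a b) c
      = mul (M12 mul p).1 (M12 mul p).2 := by rw [← twistMul_apply_s16 mul F, ← h₁₂]
    _ = mul (M23 mul p).1 (M23 mul p).2 := hG.mul_assoc _ _ _
    _ = twistMul mul F a (twistMul mul F b c) := by rw [← twistMul_apply_s16 mul F, ← h₂₃]

theorem isGroup_twistMul (ht : IsGrpTwist mul e r F Φ Ψ) (hG : IsGroup mul e inv) :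
    IsGroup (twistMul mul F) e (twistInv inv F Ψ) := by
  have h₁₂ (a : G) : M12 (twistMul mul F) (tripleTwist F Ψ (a, inv a, a)) = (e, a) := by
    rw [ht.M12_tripleTwist, M12, hG.mul_inv, ht.g2a]
  have h₂₃ (a : G) : M23 (twistMul mul F) (tripleTwist F Ψ (a, inv a, a)) = (a, e) := by
    rw [ht.M23_tripleTwist, M23, hG.inv_mul, ht.g2b]
  simp only [M12, M23, Prod.mk.injEq] at h₁₂ h₂₃
  exact
    { mul_assoc := ht.twistMul_assoc hG
      one_mul a := by simpa only [ht.g2a, hG.one_mul] using twistMul_apply_s16 mul F (e, a)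
      mul_one a := by simpa only [ht.g2b, hG.mul_one] using twistMul_apply_s16 mul F (a, e)
      inv_mul a := by simpa only [twistInv, (h₁₂ a).2] using (h₂₃ a).2
      mul_inv a := by simpa only [twistInv, (h₂₃ a).1] using (h₁₂ a).1 }

theorem twistComparison_bijective (ht : IsGrpTwist mul e r F Φ Ψ) (hG : IsGroup mul e inv) :
    Function.Bijective (twistComparison inv F) :=
  hG.twistComparison_bijective (ht.isGroup_twistMul hG)

theorem tripleTwist_fst (ht : IsGrpTwist mul e r F Φ Ψ) (hG : IsGroup mul e inv) (x y : G) :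
    (tripleTwist F Ψ (x, y, inv (mul x y))).1 = twistComparison inv F x := by
  have h := congrArg Prod.fst (ht.M23_tripleTwist (x, y, inv (mul x y)))
  simpa only [twistComparison, M23, hG.mul_inv_mul_rev] using h

theorem twistMul_twistPartner (ht : IsGrpTwist mul e r F Φ Ψ) (hG : IsGroup mul e inv) (x y : G) :
    twistMul mul F (twistComparison inv F x) (twistPartner mul inv F Ψ x y) =
      twistComparison inv F (mul x y) := by
  rw [← ht.tripleTwist_fst hG x y]
  exact congrArg Prod.fst (ht.M12_tripleTwist (x, y, inv (mul x y)))

theorem twisted_twistPartner_fst (ht : IsGrpTwist mul e r F Φ Ψ) (hG : IsGroup mul e inv)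
    (hmr : ∀ p, mul (r p).1 (r p).2 = mul p.1 p.2) (x y : G) :
    (twisted r F (twistComparison inv F x, twistPartner mul inv F Ψ x y)).1 =
      twistComparison inv F (r (x, y)).1 := by
  have hE : E12 r (x, y, inv (mul x y)) =
      ((r (x, y)).1, (r (x, y)).2, inv (mul (r (x, y)).1 (r (x, y)).2)) := by
    rw [hmr]
    rfl
  rw [← ht.tripleTwist_fst hG x y, ← ht.tripleTwist_fst hG (r (x, y)).1 (r (x, y)).2, ← hE,
    ht.tripleTwist_E12]
  rfl

theorem twistPartner_bijective (ht : IsGrpTwist mul e r F Φ Ψ) (hG : IsGroup mul e inv) (x : G) :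
    Function.Bijective (twistPartner mul inv F Ψ x) := by
  have hcomp : twistMul mul F (twistComparison inv F x) ∘ twistPartner mul inv F Ψ x =
      twistComparison inv F ∘ mul x :=
    funext (ht.twistMul_twistPartner hG x)
  rw [← ((ht.isGroup_twistMul hG).mul_left_bijective (twistComparison inv F x)).of_comp_iff', hcomp]
  exact (ht.twistComparison_bijective hG).comp (hG.mul_left_bijective x)

end IsGrpTwist

end Twist

theorem twisted_additive_group_isomorphic_general {G : Type*} (mul : G → G → G) (e : G)
    (inv : G → G) (hG : IsGroup mul e inv)
    (r F : (G × G) ≃ (G × G)) (Φ Ψ : (G × G × G) ≃ (G × G × G)) (σ τ σ' : G → G → G)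
    (hmr : ∀ p, mul (r p).1 (r p).2 = mul p.1 p.2)
    (hσ : ∀ x y, (r (x, y)).1 = σ x y)
    (hτ : ∀ x, Function.LeftInverse (τ x) (σ x) ∧ Function.RightInverse (τ x) (σ x))
    (ht : IsGrpTwist mul e r F Φ Ψ)
    (hσ' : ∀ x y, (twisted r F (x, y)).1 = σ' x y) :
    (∀ a, Function.Bijective (σ' a)) ∧
      ∃ f : G → G, Function.Bijective f ∧
        ∀ τ' : G → G → G, (∀ a, Function.LeftInverse (τ' a) (σ' a)) →
          ∀ x y, f (mul x (τ x y)) = twistMul mul F (f x) (τ' (f x) (f y)) := by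
  set f := twistComparison inv F
  have hf : Function.Bijective f := ht.twistComparison_bijective hG
  let v : G → G → G := twistPartner mul inv F Ψ
  have hbraid (x y : G) : σ' (f x) (v x y) = f (σ x y) := by
    rw [← hσ', ← hσ, ht.twisted_twistPartner_fst hG hmr]
  refine ⟨fun a => ?_, f, hf, fun τ' hτ' x z => ?_⟩
  · obtain ⟨x, rfl⟩ := hf.surjective a
    have hσx : Function.Bijective (σ x) := ⟨(hτ x).1.injective, (hτ x).2.surjective⟩
    have hcomp : σ' (f x) ∘ v x = f ∘ σ x := funext (hbraid x)
    rw [← Function.Bijective.of_comp_iff _ (ht.twistPartner_bijective hG x), hcomp]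
    exact hf.comp hσx
  · calc f (mul x (τ x z))
        = twistMul mul F (f x) (v x (τ x z)) := (ht.twistMul_twistPartner hG x (τ x z)).symm
      _ = twistMul mul F (f x) (τ' (f x) (f z)) := by
        rw [← hτ' (f x) (v x (τ x z)), hbraid, (hτ x).2 z]

theorem twisted_additive_group_isomorphic {G : Type*} (mul : G → G → G) (e : G)
    (inv : G → G) (hG : IsGroup mul e inv)
    (r F : (G × G) ≃ (G × G)) (Φ Ψ : (G × G × G) ≃ (G × G × G))
    (σ γ τ σ' γ' τ' : G → G → G)
    (hbr : IsBraidingOp mul e r)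
    (hr : ∀ x y, r (x, y) = (σ x y, γ y x))
    (hτ : ∀ x, Function.LeftInverse (τ x) (σ x) ∧ Function.RightInverse (τ x) (σ x))
    (ht : IsGrpTwist mul e r F Φ Ψ)
    (hr' : ∀ x y, twisted r F (x, y) = (σ' x y, γ' y x))
    (hτ' : ∀ x, Function.LeftInverse (τ' x) (σ' x) ∧ Function.RightInverse (τ' x) (σ' x)) :
    ∃ f : G → G, Function.Bijective f ∧
      ∀ x y, f (mul x (τ x y)) = twistMul mul F (f x) (τ' (f x) (f y)) := by
  obtain ⟨-, f, hf, hadd⟩ := twisted_additive_group_isomorphic_general mul e inv hG r F Φ Ψ σ τ σ'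
    hbr.mul_r (fun x y => congrArg Prod.fst (hr x y)) hτ ht fun x y => congrArg Prod.fst (hr' x y)
  exact ⟨f, hf, hadd τ' fun x => (hτ' x).1⟩

end BraceTwist
end
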